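/- There exists a universal constant C (e.g. C=92) such that for every finite connected simple regular graph G = (V,E), if ω is a uniform spanning tree of G and X a uniformly random vertex independent of ω, then E[deg(X;ω)²] ≤ C. -/

import Mathlib

open Finset
open scoped Classical

/-- `T` is (the edge set of) a spanning tree of `G`. -/
def IsSpanningTree {V : Type*} [Fintype V] [DecidableEq V] (G : SimpleGraph V)
    (T : Finset (Sym2 V)) : Prop :=
  (T : Set (Sym2 V)) ⊆ G.edgeSet ∧ (SimpleGraph.fromEdgeSet (T : Set (Sym2 V))).IsTree

/-- Degree of a vertex in a configuration (finite set of edges). -/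
def degIn {V : Type*} [Fintype V] [DecidableEq V] (x : V) (T : Finset (Sym2 V)) : ℕ :=
  (T.filter fun e => x ∈ e).card

namespace UST

section forest
variable {V : Type} [Fintype V] [DecidableEq V]

/-- One step of the parent map `p`, fixing the root. -/
noncomputable def stp (r : V) (p : {v : V // v ≠ r} → V) (v : V) : V :=
  if h : v = r then r else p ⟨v, h⟩

/-- Every vertex is led to the root. -/
def Rooted (r : V) (p : {v : V // v ≠ r} → V) : Prop :=
  ∀ v, ∃ k, (stp r p)^[k] v = r

/-- Coordinate vector restricted to the non-root vertices. -/
noncomputable def dl (r : V) (y : V) : {v : V // v ≠ r} → ℝ :=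
  fun u => if (u : V) = y then 1 else 0

/-- identity minus parent matrix -/
noncomputable def pMat (r : V) (p : {v : V // v ≠ r} → V) :
    Matrix {v : V // v ≠ r} {v : V // v ≠ r} ℝ :=
  Matrix.of fun v u => dl r v u - dl r (p v) u

/-- reduced weighted Laplacian -/
noncomputable def redLap (r : V) (w : Sym2 V → ℝ) : Matrix {v : V // v ≠ r} {v : V // v ≠ r} ℝ :=
  fun v => ∑ y : V, w s((v : V), y) • (dl r v - dl r y)

theorem height_exists (r : V) (p : {v : V // v ≠ r} → V) (hp : Rooted r p) :
    ∃ h : V → ℕ, ∀ v : {v : V // v ≠ r}, h (p v) < h v := by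
  refine ⟨fun v => Nat.find (hp v), fun v => ?_⟩
  have h1 := Nat.find_spec (hp v)
  rcases hk : Nat.find (hp v) with _ | m
  · rw [hk] at h1
    exact absurd h1 v.2
  · rw [hk, Function.iterate_succ_apply] at h1
    have h2 : stp r p v = p v := by simp [stp, v.2]
    rw [h2] at h1
    change Nat.find (hp (p v)) < Nat.find (hp v)
    rw [hk]
    exact Nat.lt_succ_of_le (Nat.find_min' (hp (p v)) h1)

theorem rooted_of_height (r : V) (p : {v : V // v ≠ r} → V) (h : V → ℕ)
    (hh : ∀ v : {v : V // v ≠ r}, h (p v) < h v) : Rooted r p := by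
  intro v
  induction hn : h v using Nat.strong_induction_on generalizing v with
  | _ n ih =>
    by_cases hv : v = r
    · exact ⟨0, hv⟩
    · obtain ⟨k, hk⟩ := ih (h (p ⟨v, hv⟩)) (hn ▸ hh ⟨v, hv⟩) _ rfl
      refine ⟨k + 1, ?_⟩
      rw [Function.iterate_succ_apply]
      simpa [stp, hv] using hk

theorem det_rooted (r : V) (p : {v : V // v ≠ r} → V) (hp : Rooted r p) :
    (pMat r p).det = 1 := by
  obtain ⟨h, hh⟩ := height_exists r p hp
  have hT : (pMat r p).BlockTriangular (fun v => -(h v : ℤ)) := by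
    intro i j hij
    have h1 : (j : V) ≠ i := by
      rintro h; simp [h] at hij
    have h2 : (j : V) ≠ p i := by
      intro h'
      have := hh i
      rw [← h'] at this
      simp only at hij
      omega
    simp [pMat, dl, h1, h2]
  rw [hT.det]
  apply Finset.prod_eq_one
  intro a _
  suffices hone : (pMat r p).toSquareBlock (fun v => -(h v : ℤ)) a = 1 by
    rw [hone, Matrix.det_one]
  ext ⟨i, hi⟩ ⟨j, hj⟩
  have h2 : (j : V) ≠ p i := by
    intro h'
    have := hh i
    rw [← h'] at this
    omega
  simp [Matrix.toSquareBlock_def, pMat, dl, h2, Matrix.one_apply, Subtype.ext_iff, eq_comm]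

theorem det_not_rooted (r : V) (p : {v : V // v ≠ r} → V) (hp : ¬ Rooted r p) :
    (pMat r p).det = 0 := by
  rw [← Matrix.exists_mulVec_eq_zero_iff]
  unfold Rooted at hp
  push Not at hp
  obtain ⟨v₀, hv₀⟩ := hp
  set ψ : V → ℝ := fun v => if ∀ k, (stp r p)^[k] v ≠ r then 1 else 0 with hψ
  have hr : ψ r = 0 := by
    simp only [hψ, ite_eq_right_iff]
    intro h
    exact absurd rfl (h 0)
  have hstep : ∀ v : {v : V // v ≠ r}, ψ (p v) = ψ v := by
    intro v
    have h2 : stp r p v = p v := by simp [stp, v.2]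
    simp only [hψ]
    congr 1
    rw [eq_iff_iff]
    constructor
    · intro h k
      cases k with
      | zero => exact v.2
      | succ k => rw [Function.iterate_succ_apply, h2]; exact h k
    · intro h k
      have := h (k+1)
      rwa [Function.iterate_succ_apply, h2] at this
  have hsum : ∀ y : V, ∑ u : {v : V // v ≠ r}, dl r y u * ψ u = ψ y := by
    intro y
    by_cases hy : y = r
    · subst hy
      rw [hr]
      apply Finset.sum_eq_zero
      intro u _
      simp [dl, u.2]
    · rw [Finset.sum_eq_single ⟨y, hy⟩]
      · simp [dl]
      · intro b _ hb
        have : (b : V) ≠ y := fun h => hb (Subtype.ext h)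
        simp [dl, this]
      · simp
  refine ⟨fun v => ψ v, ?_, ?_⟩
  · intro h
    have := congrFun h ⟨v₀, hv₀ 0⟩
    simp only [hψ, Pi.zero_apply] at this
    rw [if_pos hv₀] at this
    exact one_ne_zero this
  · ext v
    simp only [Matrix.mulVec, dotProduct, pMat, Matrix.of_apply, sub_mul, Finset.sum_sub_distrib, Pi.zero_apply]
    rw [hsum, hsum, hstep, sub_self]

theorem det_redLap (r : V) (w : Sym2 V → ℝ) :
    (redLap r w).det = ∑ p ∈ Finset.univ.filter (fun p => Rooted r p),
      ∏ v : {v : V // v ≠ r}, w s((v : V), p v) := by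
  have h1 := (Matrix.detRowAlternating (n := {v : V // v ≠ r}) (R := ℝ)).toMultilinearMap.map_sum
    (fun (v : {v : V // v ≠ r}) (y : V) => w s((v : V), y) • (dl r v - dl r y))
  have h2 : (redLap r w).det = ∑ p : {v : V // v ≠ r} → V,
      Matrix.det (fun v : {v : V // v ≠ r} => w s((v : V), p v) • (dl r v - dl r (p v))) := h1
  rw [h2, Finset.sum_filter]
  apply Finset.sum_congr rfl
  intro p _
  have h3 := (Matrix.detRowAlternating (n := {v : V // v ≠ r}) (R := ℝ)).toMultilinearMap.map_smul_univ
    (fun v : {v : V // v ≠ r} => w s((v : V), p v)) (fun v => dl r v - dl r (p v))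
  have h4 : Matrix.det (fun v : {v : V // v ≠ r} => w s((v : V), p v) • (dl r v - dl r (p v)))
    = (∏ v : {v : V // v ≠ r}, w s((v : V), p v)) *
      (pMat r p).det := h3
  rw [h4]
  split_ifs with h
  · rw [det_rooted r p h, mul_one]
  · rw [det_not_rooted r p h, mul_zero]

theorem edge_inj (r : V) (p : {v : V // v ≠ r} → V) (hp : Rooted r p) :
    Function.Injective (fun v : {v : V // v ≠ r} => s((v : V), p v)) := by
  obtain ⟨h, hh⟩ := height_exists r p hp
  intro u v huv
  simp only [Sym2.eq_iff] at huv
  rcases huv with ⟨h1, _⟩ | ⟨h1, h2⟩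
  · exact Subtype.ext h1
  · have a := hh u
    have b := hh v
    rw [h2] at a
    rw [← h1] at b
    omega

/-- edge set of a parent map -/
noncomputable def treeOf (r : V) (p : {v : V // v ≠ r} → V) : Finset (Sym2 V) :=
  Finset.univ.image (fun v : {v : V // v ≠ r} => s((v : V), p v))

theorem treeOf_card (r : V) (p : {v : V // v ≠ r} → V) (hp : Rooted r p) :
    (treeOf r p).card + 1 = Fintype.card V := by
  rw [treeOf, Finset.card_image_of_injective _ (edge_inj r p hp), Finset.card_univ,
    Fintype.card_subtype_compl, Fintype.card_subtype_eq]
  have : 0 < Fintype.card V := Fintype.card_pos_iff.2 ⟨r⟩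
  omega

theorem treeOf_isTree (r : V) (p : {v : V // v ≠ r} → V) (hp : Rooted r p) :
    (SimpleGraph.fromEdgeSet (treeOf r p : Set (Sym2 V))).IsTree := by
  obtain ⟨h, hh⟩ := height_exists r p hp
  have hne : ∀ v : {v : V // v ≠ r}, (v : V) ≠ p v := by
    intro v hv
    have := hh v
    rw [← hv] at this
    omega
  have hreach : ∀ v, (SimpleGraph.fromEdgeSet (treeOf r p : Set (Sym2 V))).Reachable v r := by
    intro v
    induction hn : h v using Nat.strong_induction_on generalizing v with
    | _ n ih =>
      by_cases hv : v = r
      · rw [hv]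
      · have h1 := ih (h (p ⟨v, hv⟩)) (hn ▸ hh ⟨v, hv⟩) _ rfl
        refine SimpleGraph.Reachable.trans (SimpleGraph.Adj.reachable ?_) h1
        rw [SimpleGraph.fromEdgeSet_adj]
        refine ⟨?_, hne ⟨v, hv⟩⟩
        rw [Finset.mem_coe, treeOf, Finset.mem_image]
        exact ⟨⟨v, hv⟩, Finset.mem_univ _, rfl⟩
  rw [SimpleGraph.isTree_iff_connected_and_card]
  constructor
  · haveI : Nonempty V := ⟨r⟩
    exact SimpleGraph.Connected.mk (fun a b => (hreach a).trans (hreach b).symm)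
  · rw [SimpleGraph.edgeSet_fromEdgeSet]
    have : (treeOf r p : Set (Sym2 V)) \ Sym2.diagSet = (treeOf r p : Set (Sym2 V)) := by
      rw [sdiff_eq_left, Set.disjoint_left]
      intro e he hd
      rw [Finset.mem_coe, treeOf, Finset.mem_image] at he
      obtain ⟨v, _, rfl⟩ := he
      exact hne v (by simpa using hd)
    rw [this, Nat.card_eq_fintype_card (α := V), ← treeOf_card r p hp]
    simp

theorem treeOf_injOn (r : V) (p q : {v : V // v ≠ r} → V) (hp : Rooted r p) (hq : Rooted r q)
    (h : treeOf r p = treeOf r q) : p = q := by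
  obtain ⟨a, ha⟩ := height_exists r p hp
  have key : ∀ v : {v : V // v ≠ r}, p v ≠ q v →
      ∃ hu : p v ≠ r, p ⟨p v, hu⟩ ≠ q ⟨p v, hu⟩ := by
    intro v hv
    have h1 : s((v : V), p v) ∈ treeOf r q := by
      rw [← h]; exact Finset.mem_image_of_mem _ (Finset.mem_univ v)
    rw [treeOf, Finset.mem_image] at h1
    obtain ⟨u, _, hu⟩ := h1
    rw [Sym2.eq_iff] at hu
    rcases hu with ⟨h1, h2⟩ | ⟨h1, h2⟩
    · have : u = v := Subtype.ext h1
      subst this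
      exact absurd h2.symm hv
    · refine ⟨h1 ▸ u.2, ?_⟩
      have hu : u = ⟨p v, h1 ▸ u.2⟩ := Subtype.ext h1
      rw [← hu, h2]
      intro h3
      have a1 := ha v
      have a2 := ha u
      rw [h3, h1] at a2
      omega
  have main : ∀ n, ∀ v : {v : V // v ≠ r}, a v = n → p v = q v := by
    intro n
    induction n using Nat.strong_induction_on with
    | _ n ih =>
      intro v hv
      by_contra hne
      obtain ⟨hu, hu2⟩ := key v hne
      exact hu2 (ih (a (p v)) (hv ▸ ha v) ⟨p v, hu⟩ rfl)
  funext v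
  exact main _ v rfl

theorem treeOf_surj (r : V) (T : Finset (Sym2 V))
    (hT : (SimpleGraph.fromEdgeSet (T : Set (Sym2 V))).IsTree) (hd : ∀ e ∈ T, ¬ e.IsDiag) :
    ∃ p, Rooted r p ∧ treeOf r p = T := by
  set H := SimpleGraph.fromEdgeSet (T : Set (Sym2 V)) with hH
  have hc := hT.connected
  have step : ∀ v : {v : V // v ≠ r}, ∃ y, H.Adj v y ∧ H.dist y r < H.dist v r := by
    intro v
    obtain ⟨v, hv⟩ := v
    obtain ⟨W, hW⟩ := hc.exists_walk_length_eq_dist v r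
    cases W with
    | nil => exact absurd rfl hv
    | cons hadj W' =>
      refine ⟨_, hadj, ?_⟩
      rw [← hW, SimpleGraph.Walk.length_cons]
      exact Nat.lt_succ_of_le (SimpleGraph.dist_le W')
  choose p hp1 hp2 using step
  have hp := rooted_of_height r p (fun y => H.dist y r) hp2
  refine ⟨p, hp, ?_⟩
  apply Finset.eq_of_subset_of_card_le
  · intro e he
    rw [treeOf, Finset.mem_image] at he
    obtain ⟨v, _, rfl⟩ := he
    have := hp1 v
    rw [hH, SimpleGraph.fromEdgeSet_adj] at this
    exact_mod_cast this.1
  · have h1 := treeOf_card r p hp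
    have h2 := (SimpleGraph.isTree_iff_connected_and_card.1 hT).2
    rw [hH, SimpleGraph.edgeSet_fromEdgeSet] at h2
    have : (T : Set (Sym2 V)) \ Sym2.diagSet = (T : Set (Sym2 V)) := by
      rw [sdiff_eq_left, Set.disjoint_left]
      intro e he hde
      exact hd e he (by simpa using hde)
    rw [this, Nat.card_eq_fintype_card (α := V)] at h2
    simp at h2
    omega

theorem matrix_tree (G : SimpleGraph V) (r : V) (w : Sym2 V → ℝ)
    (hw : ∀ e, e ∉ G.edgeSet → w e = 0) :
    (redLap r w).det = ∑ T ∈ Finset.univ.filter (fun T => IsSpanningTree G T), ∏ e ∈ T, w e := by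
  rw [det_redLap]
  have h0 : ∑ p ∈ Finset.univ.filter (fun p => Rooted r p),
      ∏ v : {v : V // v ≠ r}, w s((v : V), p v) =
      ∑ p ∈ Finset.univ.filter (fun p => Rooted r p ∧ ∀ v : {v : V // v ≠ r}, s((v:V), p v) ∈ G.edgeSet),
      ∏ v : {v : V // v ≠ r}, w s((v : V), p v) := by
    symm
    apply Finset.sum_subset
    · intro p hp
      simp only [Finset.mem_filter, Finset.mem_univ, true_and] at hp ⊢
      exact hp.1
    · intro p hp hp2
      simp only [Finset.mem_filter, Finset.mem_univ, true_and, not_and, not_forall] at hp hp2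
      obtain ⟨v, hv⟩ := hp2 hp
      exact Finset.prod_eq_zero (Finset.mem_univ v) (hw _ hv)
  rw [h0]
  apply Finset.sum_bij (fun p _ => treeOf r p)
  · intro p hp
    simp only [Finset.mem_filter, Finset.mem_univ, true_and] at hp ⊢
    refine ⟨?_, treeOf_isTree r p hp.1⟩
    intro e he
    rw [Finset.mem_coe, treeOf, Finset.mem_image] at he
    obtain ⟨v, _, rfl⟩ := he
    exact hp.2 v
  · intro p hp q hq h
    simp only [Finset.mem_filter, Finset.mem_univ, true_and] at hp hq
    exact treeOf_injOn r p q hp.1 hq.1 h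
  · intro T hT
    simp only [Finset.mem_filter, Finset.mem_univ, true_and] at hT
    obtain ⟨p, hp, hpT⟩ := treeOf_surj r T hT.2 (fun e he => G.not_isDiag_of_mem_edgeSet (hT.1 he))
    refine ⟨p, ?_, hpT⟩
    simp only [Finset.mem_filter, Finset.mem_univ, true_and]
    refine ⟨hp, fun v => hT.1 ?_⟩
    rw [← hpT]
    exact Finset.mem_coe.2 (Finset.mem_image_of_mem _ (Finset.mem_univ v))
  · intro p hp
    simp only [Finset.mem_filter, Finset.mem_univ, true_and] at hp
    rw [treeOf, Finset.prod_image (fun a _ b _ h => edge_inj r p hp.1 h)]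

end forest

section kirchhoff
variable {V : Type} [Fintype V] [DecidableEq V]

/-- indicator of the edges -/
noncomputable def w0 (G : SimpleGraph V) (e : Sym2 V) : ℝ := if e ∈ G.edgeSet then 1 else 0

/-- indicator of one edge -/
noncomputable def we (e₀ : Sym2 V) (e : Sym2 V) : ℝ := if e = e₀ then 1 else 0

/-- spanning trees -/
noncomputable def trees (G : SimpleGraph V) : Finset (Finset (Sym2 V)) :=
  Finset.univ.filter (fun T => IsSpanningTree G T)

/-- number of spanning trees with an edge -/
noncomputable def c1 (G : SimpleGraph V) (e : Sym2 V) : ℝ :=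
  ∑ T ∈ trees G, if e ∈ T then 1 else 0

/-- number of spanning trees with two edges -/
noncomputable def c2 (G : SimpleGraph V) (e f : Sym2 V) : ℝ :=
  ∑ T ∈ trees G, (if e ∈ T then 1 else 0) * (if f ∈ T then 1 else 0)

theorem redLap_add (r : V) (w w' : Sym2 V → ℝ) :
    redLap r (w + w') = redLap r w + redLap r w' := by
  ext v u
  simp [redLap, add_mul, Finset.sum_add_distrib]

theorem redLap_we (r x y : V) (h : x ≠ y) :
    redLap r (we s(x, y)) = Matrix.vecMulVec (dl r x - dl r y) (dl r x - dl r y) := by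
  ext v u
  simp only [redLap, Finset.sum_apply, Pi.smul_apply, Pi.sub_apply, smul_eq_mul,
    Matrix.vecMulVec_apply, we]
  by_cases hx : (v : V) = x
  · have : ∀ z, s((v : V), z) = s(x, y) ↔ z = y := by
      intro z; rw [hx]; simp [Sym2.eq_iff, h]
    simp only [this, ite_mul, one_mul, zero_mul, Finset.sum_ite_eq', Finset.mem_univ, if_true]
    simp [dl, hx, h]
  · by_cases hy : (v : V) = y
    · have : ∀ z, s((v : V), z) = s(x, y) ↔ z = x := by
        intro z; rw [hy]; simp [Sym2.eq_iff, Ne.symm h]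
      simp only [this, ite_mul, one_mul, zero_mul, Finset.sum_ite_eq', Finset.mem_univ, if_true]
      simp [dl, hy, h.symm]
    · have : ∀ z, s((v : V), z) = s(x, y) ↔ False := by
        intro z; simp [Sym2.eq_iff, hx, hy]
      simp only [this]
      simp [dl, hx, hy]

theorem redLap_apply (r : V) (w : Sym2 V → ℝ) (v u : {v : V // v ≠ r}) :
    redLap r w v u = (∑ y, w s((v : V), y)) * (if u = v then 1 else 0) - w s((v : V), u) := by
  simp [redLap, mul_sub, Finset.sum_sub_distrib, dl, Subtype.ext_iff, Finset.sum_mul]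

theorem redLap_symm (r : V) (w : Sym2 V → ℝ) : (redLap r w).transpose = redLap r w := by
  ext v u
  rw [Matrix.transpose_apply, redLap_apply, redLap_apply]
  rw [Sym2.eq_swap]
  by_cases h : u = v
  · subst h; rfl
  · simp [h, Ne.symm h]

theorem prod_w0 (G : SimpleGraph V) (h : Sym2 V → ℝ) (T : Finset (Sym2 V)) (hT : T ∈ trees G) :
    ∏ e ∈ T, w0 G e * h e = ∏ e ∈ T, h e := by
  refine Finset.prod_congr rfl (fun e he => ?_)
  simp only [trees, Finset.mem_filter] at hT
  have : e ∈ G.edgeSet := hT.2.1 he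
  simp [w0, this]

theorem det_w0 (G : SimpleGraph V) (r : V) : (redLap r (w0 G)).det = (trees G).card := by
  rw [matrix_tree G r _ (fun e he => by simp [w0, he])]
  change ∑ T ∈ trees G, _ = _
  have : ∀ T ∈ trees G, ∏ e ∈ T, w0 G e = 1 := by
    intro T hT
    have := prod_w0 G (fun _ => 1) T hT
    simpa using this
  rw [Finset.sum_congr rfl this]
  simp

theorem det_w1 (G : SimpleGraph V) (r : V) (e : Sym2 V) (he : e ∈ G.edgeSet) :
    (redLap r (w0 G + we e)).det = (trees G).card + c1 G e := by
  have hw : w0 G + we e = fun f => w0 G f * (if f = e then 2 else 1) := by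
    funext f
    simp only [Pi.add_apply, we]
    split_ifs with h
    · subst h; simp [w0, he]; norm_num
    · simp
  rw [hw, matrix_tree G r _ (fun e he => by simp [w0, he])]
  change ∑ T ∈ trees G, _ = _
  have : ∀ T ∈ trees G, ∏ f ∈ T, w0 G f * (if f = e then 2 else 1) = 1 + if e ∈ T then 1 else 0 := by
    intro T hT
    rw [prod_w0 G _ T hT, Finset.prod_ite_eq']
    split_ifs <;> norm_num
  rw [Finset.sum_congr rfl this, Finset.sum_add_distrib, c1]
  simp

theorem det_w2 (G : SimpleGraph V) (r : V) (e e' : Sym2 V) (he : e ∈ G.edgeSet)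
    (he' : e' ∈ G.edgeSet) (hne : e ≠ e') :
    (redLap r (w0 G + we e + we e')).det = (trees G).card + c1 G e + c1 G e' + c2 G e e' := by
  have hw : w0 G + we e + we e' =
      fun f => w0 G f * ((if f = e then 2 else 1) * (if f = e' then 2 else 1)) := by
    funext f
    simp only [Pi.add_apply, we]
    split_ifs with h h'
    · exact absurd (h.symm.trans h') hne
    · subst h; simp [w0, he]; norm_num
    · subst_vars; simp [w0, he']; norm_num
    · simp
  rw [hw, matrix_tree G r _ (fun e he => by simp [w0, he])]
  change ∑ T ∈ trees G, _ = _
  have : ∀ T ∈ trees G,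
      ∏ f ∈ T, w0 G f * ((if f = e then 2 else 1) * (if f = e' then 2 else 1)) =
      1 + (if e ∈ T then 1 else 0) + (if e' ∈ T then 1 else 0)
        + (if e ∈ T then 1 else 0) * (if e' ∈ T then 1 else 0) := by
    intro T hT
    rw [prod_w0 G _ T hT, Finset.prod_mul_distrib, Finset.prod_ite_eq', Finset.prod_ite_eq']
    split_ifs <;> norm_num
  rw [Finset.sum_congr rfl this, Finset.sum_add_distrib, Finset.sum_add_distrib,
    Finset.sum_add_distrib, c1, c1, c2]
  simp

/-- Kirchhoff formula -/
theorem c1_eq (G : SimpleGraph V) (r x y : V) (h : G.Adj x y) (hN : (trees G).card ≠ 0) :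
    c1 G s(x, y) = (trees G).card *
      ((dl r x - dl r y) ⬝ᵥ ((redLap r (w0 G))⁻¹.mulVec (dl r x - dl r y))) := by
  have hdet : IsUnit (redLap r (w0 G)).det := by
    rw [det_w0]; exact isUnit_iff_ne_zero.2 (by exact_mod_cast hN)
  have h1 := det_w1 G r s(x, y) h
  rw [redLap_add, redLap_we r x y h.ne, Matrix.vecMulVec_eq (Fin 1),
    Matrix.det_add_mul _ _ hdet, det_w0, Matrix.det_unique, Matrix.mul_assoc, Matrix.add_apply, Matrix.one_apply_eq,
    Matrix.mul_apply] at h1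
  have h2 : ∑ j, Matrix.replicateRow (Fin 1) (dl r x - dl r y) default j *
      ((redLap r (w0 G))⁻¹ * Matrix.replicateCol (Fin 1) (dl r x - dl r y)) j default =
      (dl r x - dl r y) ⬝ᵥ ((redLap r (w0 G))⁻¹.mulVec (dl r x - dl r y)) := by
    simp [dotProduct, Matrix.mulVec, Matrix.mul_apply]
  rw [h2] at h1
  linarith

/-- Negative correlation -/
theorem neg_corr (G : SimpleGraph V) (r x y z u : V) (h : G.Adj x y) (h' : G.Adj z u)
    (hne : s(x, y) ≠ s(z, u)) (hN : (trees G).card ≠ 0) :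
    c2 G s(x, y) s(z, u) * (trees G).card ≤ c1 G s(x, y) * c1 G s(z, u) := by
  have hdet : IsUnit (redLap r (w0 G)).det := by
    rw [det_w0]; exact isUnit_iff_ne_zero.2 (by exact_mod_cast hN)
  have hN' : (0 : ℝ) < (trees G).card := by exact_mod_cast Nat.pos_of_ne_zero hN
  have e1 := c1_eq G r x y h hN
  have e2 := c1_eq G r z u h' hN
  have h1 := det_w2 G r _ _ h h' hne
  set b := dl r x - dl r y with hb
  set b' := dl r z - dl r u with hb'
  set L := redLap r (w0 G) with hL
  obtain ⟨B, hB0, hB1⟩ : ∃ B : Matrix (Fin 2) {v : V // v ≠ r} ℝ, B 0 = b ∧ B 1 = b' :=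
    ⟨Matrix.of ![b, b'], rfl, rfl⟩
  have hBB : Matrix.vecMulVec b b + Matrix.vecMulVec b' b' = B.transpose * B := by
    ext i j
    simp [Matrix.mul_apply, Matrix.vecMulVec_apply, hB0, hB1, Fin.sum_univ_two]
  have hsym : (L⁻¹).transpose = L⁻¹ := by
    rw [Matrix.transpose_nonsing_inv, hL, redLap_symm]
  rw [redLap_add, redLap_add, redLap_we r x y h.ne, redLap_we r z u h'.ne, add_assoc, hBB,
    Matrix.det_add_mul _ _ hdet, det_w0] at h1
  have hent : ∀ i j, (B * L⁻¹ * B.transpose) i j = B i ⬝ᵥ (L⁻¹.mulVec (B j)) := by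
    intro i j
    rw [Matrix.mul_assoc, Matrix.mul_apply]
    simp [dotProduct, Matrix.mulVec, Matrix.mul_apply]
  have hsw : b' ⬝ᵥ (L⁻¹.mulVec b) = b ⬝ᵥ (L⁻¹.mulVec b') := by
    rw [Matrix.dotProduct_mulVec, ← Matrix.mulVec_transpose, hsym, dotProduct_comm]
  rw [Matrix.det_fin_two] at h1
  simp only [Matrix.add_apply, hent] at h1
  simp only [hB0, hB1, Matrix.one_apply_eq, ne_eq,
    Fin.isValue, zero_ne_one, one_ne_zero, not_false_eq_true, Matrix.one_apply_ne, zero_add, hsw] at h1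
  set N : ℝ := ((trees G).card : ℝ)
  set p := b ⬝ᵥ (L⁻¹.mulVec b)
  set q := b' ⬝ᵥ (L⁻¹.mulVec b')
  set t := b ⬝ᵥ (L⁻¹.mulVec b')
  have h3 : c2 G s(x, y) s(z, u) = N * (p * q - t * t) := by
    rw [e1, e2] at h1
    linarith
  rw [h3, e1, e2]
  nlinarith [mul_nonneg hN'.le (mul_nonneg hN'.le (mul_self_nonneg t))]

theorem potential (G : SimpleGraph V) (r x y : V) (h : G.Adj x y) (hN : (trees G).card ≠ 0) :
    ∃ φ : V → ℝ,
      (∀ v, ∑ z, w0 G s(v, z) * (φ v - φ z) = (if v = x then 1 else 0) - (if v = y then 1 else 0)) ∧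
      c1 G s(x, y) / (trees G).card = φ x - φ y := by
  have hdet : IsUnit (redLap r (w0 G)).det := by
    rw [det_w0]; exact isUnit_iff_ne_zero.2 (by exact_mod_cast hN)
  have hN' : ((trees G).card : ℝ) ≠ 0 := by exact_mod_cast hN
  rw [c1_eq G r x y h hN, mul_div_cancel_left₀ _ hN']
  set ψ := (redLap r (w0 G))⁻¹.mulVec (dl r x - dl r y) with hψ
  set φ : V → ℝ := fun v => if hv : v ≠ r then ψ ⟨v, hv⟩ else 0 with hφ
  have hφψ : ∀ u : {v : V // v ≠ r}, φ u = ψ u := fun u => by simp [hφ, u.2]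
  have hr : φ r = 0 := by simp [hφ]
  have hsum : ∀ y : V, dl r y ⬝ᵥ ψ = φ y := by
    intro y
    rw [dotProduct]
    by_cases hy : y = r
    · subst hy
      rw [hr]
      apply Finset.sum_eq_zero
      intro u _
      simp [dl, u.2]
    · rw [Finset.sum_eq_single ⟨y, hy⟩]
      · simp [dl, hφ, hy]
      · intro b _ hb
        have : (b : V) ≠ y := fun h => hb (Subtype.ext h)
        simp [dl, this]
      · simp
  have hmul : (redLap r (w0 G)).mulVec ψ = dl r x - dl r y := by
    rw [hψ, Matrix.mulVec_mulVec, Matrix.mul_nonsing_inv _ hdet, Matrix.one_mulVec]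
  have hne : ∀ v, v ≠ r → ∑ z, w0 G s(v, z) * (φ v - φ z) =
      (if v = x then 1 else 0) - (if v = y then 1 else 0) := by
    intro v hv
    have h1 := congrFun hmul ⟨v, hv⟩
    have h2 : (redLap r (w0 G)).mulVec ψ ⟨v, hv⟩ = ∑ z, w0 G s(v, z) * (φ v - φ z) := by
      change (∑ z : V, w0 G s(v, z) • (dl r v - dl r z)) ⬝ᵥ ψ = _
      rw [sum_dotProduct]
      refine Finset.sum_congr rfl (fun z _ => ?_)
      rw [smul_dotProduct, sub_dotProduct, hsum, hsum, smul_eq_mul]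
    rw [← h2, h1]
    simp [dl]
  refine ⟨φ, ?_, ?_⟩
  · intro v
    by_cases hv : v = r
    · subst hv
      have tot : ∑ v, ∑ z, w0 G s(v, z) * (φ v - φ z) = 0 := by
        have : ∑ v, ∑ z, w0 G s(v, z) * (φ v - φ z) = - ∑ v, ∑ z, w0 G s(v, z) * (φ v - φ z) := by
          conv_rhs => rw [Finset.sum_comm]
          rw [← Finset.sum_neg_distrib]
          refine Finset.sum_congr rfl (fun z _ => ?_)
          rw [← Finset.sum_neg_distrib]
          refine Finset.sum_congr rfl (fun u _ => ?_)
          rw [Sym2.eq_swap]; ring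
        linarith
      have tot2 : ∑ v : V, (((if v = x then 1 else 0) - (if v = y then 1 else 0) : ℝ)) = 0 := by
        simp
      rw [← Finset.add_sum_erase _ _ (Finset.mem_univ v)] at tot tot2
      have : ∑ u ∈ Finset.univ.erase v, ∑ z, w0 G s(u, z) * (φ u - φ z) =
        ∑ u ∈ Finset.univ.erase v, (((if u = x then 1 else 0) - (if u = y then 1 else 0) : ℝ)) :=
        Finset.sum_congr rfl (fun u hu => hne u (Finset.ne_of_mem_erase hu))
      linarith
    · exact hne v hv
  · rw [sub_dotProduct, hsum, hsum]

end kirchhoff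

section spectral
variable {V : Type} [Fintype V] [DecidableEq V]

theorem exists_eigen (a : V → V → ℝ) (hs : ∀ x y, a x y = a y x) :
    ∃ (f : V → V → ℝ) (l : V → ℝ),
      (∀ k, ∑ x, f k x * f k x = 1) ∧
      (∀ x y, ∑ k, f k x * f k y = if x = y then 1 else 0) ∧
      (∀ k x, ∑ y, a x y * f k y = l k * f k x) := by
  have hA : (Matrix.of a).IsHermitian := by
    ext i j
    simp [Matrix.conjTranspose_apply, hs i j]
  have hU := Matrix.mem_unitaryGroup_iff.1 hA.eigenvectorUnitary.2
  have hU' := Matrix.mem_unitaryGroup_iff'.1 hA.eigenvectorUnitary.2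
  refine ⟨fun k x => hA.eigenvectorBasis k x, hA.eigenvalues, ?_, ?_, ?_⟩
  · intro k
    have := congrFun (congrFun hU' k) k
    simpa [Matrix.mul_apply, Matrix.star_apply] using this
  · intro x y
    have := congrFun (congrFun hU x) y
    simpa [Matrix.mul_apply, Matrix.star_apply, Matrix.one_apply] using this
  · intro k x
    have := congrFun (hA.mulVec_eigenvectorBasis k) x
    simpa [Matrix.mulVec, dotProduct] using this

theorem spectral_bound (a : V → V → ℝ) (d : ℝ) (hs : ∀ x y, a x y = a y x)
    (h01 : ∀ x y, a x y = 0 ∨ a x y = 1) (hd : ∀ x, ∑ y, a x y = d)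
    (R : V → V → ℝ) (hR0 : ∀ x y, a x y = 0 → R x y = 0) (hR1 : ∀ x y, R x y ≤ 1)
    (hR : ∀ x y, a x y = 1 → ∃ φ : V → ℝ,
      (∀ v, ∑ z, a v z * (φ v - φ z) = (if v = x then 1 else 0) - (if v = y then 1 else 0)) ∧
      R x y = φ x - φ y) :
    ∑ x, ∑ y, R x y ≤ 2 * Fintype.card V ∧
    d * ∑ x, ∑ y, R x y ^ 2 ≤ 16 * Fintype.card V := by
  obtain ⟨f, l, hf1, hf2, hf3⟩ := exists_eigen a hs
  have ha0 : ∀ x y, 0 ≤ a x y := fun x y => by rcases h01 x y with h | h <;> simp [h]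
  set μ : V → ℝ := fun k => d - l k with hμ
  -- action of the Laplacian on eigenvectors
  have hL : ∀ k v, ∑ z, a v z * (f k v - f k z) = μ k * f k v := by
    intro k v
    simp only [mul_sub, Finset.sum_sub_distrib, ← Finset.sum_mul, hd, hf3, hμ]
    ring
  -- Green
  have green : ∀ g h : V → ℝ, ∑ v, h v * ∑ z, a v z * (g v - g z) =
      ∑ v, g v * ∑ z, a v z * (h v - h z) := by
    intro g h
    have e1 : ∀ g h : V → ℝ, ∑ v, h v * ∑ z, a v z * (g v - g z) =
        ∑ v, d * (h v * g v) - ∑ v, ∑ z, a v z * (h v * g z) := by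
      intro g h
      rw [← Finset.sum_sub_distrib]
      apply Finset.sum_congr rfl
      intro v _
      simp only [mul_sub, Finset.sum_sub_distrib, ← Finset.sum_mul, hd]
      rw [Finset.mul_sum]
      have : ∑ z, h v * (a v z * g z) = ∑ z, a v z * (h v * g z) :=
        Finset.sum_congr rfl (fun z _ => by ring)
      rw [this]; ring
    rw [e1, e1]
    congr 1
    · exact Finset.sum_congr rfl (fun z _ => by ring)
    · rw [Finset.sum_comm]
      refine Finset.sum_congr rfl (fun z _ => Finset.sum_congr rfl (fun y _ => ?_))
      rw [hs]; ring
  -- Dirichlet energy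
  have hE : ∀ k, ∑ x, ∑ y, a x y * (f k x - f k y) ^ 2 = 2 * μ k := by
    intro k
    have e1 : ∑ x, f k x * ∑ y, a x y * (f k x - f k y) = μ k := by
      simp only [hL]
      have : ∑ x, f k x * (μ k * f k x) = μ k * ∑ x, f k x * f k x := by
        rw [Finset.mul_sum]; exact Finset.sum_congr rfl (fun z _ => by ring)
      rw [this, hf1, mul_one]
    have e2 : ∑ x, ∑ y, a x y * (f k x - f k y) ^ 2 =
        ∑ x, ∑ y, f k x * (a x y * (f k x - f k y)) + ∑ x, ∑ y, f k y * (a x y * (f k y - f k x)) := by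
      rw [← Finset.sum_add_distrib]
      refine Finset.sum_congr rfl (fun x _ => ?_)
      rw [← Finset.sum_add_distrib]
      refine Finset.sum_congr rfl (fun y _ => ?_)
      ring
    have e3 : ∑ x, ∑ y, f k y * (a x y * (f k y - f k x)) =
        ∑ x, ∑ y, f k x * (a x y * (f k x - f k y)) := by
      rw [Finset.sum_comm]
      refine Finset.sum_congr rfl (fun z _ => Finset.sum_congr rfl (fun y _ => ?_))
      rw [hs]
    simp only [Finset.mul_sum] at e1
    rw [e2, e3, e1]; ring
  have hμ0 : ∀ k, 0 ≤ μ k := by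
    intro k
    have : 0 ≤ ∑ x, ∑ y, a x y * (f k x - f k y) ^ 2 :=
      Finset.sum_nonneg (fun x _ => Finset.sum_nonneg (fun y _ => mul_nonneg (ha0 x y) (sq_nonneg _)))
    rw [hE] at this
    linarith
  set g : V → V → V → ℝ := fun k x y => a x y * (f k x - f k y) ^ 2 / μ k with hg
  have hg0 : ∀ k x y, 0 ≤ g k x y := fun k x y =>
    div_nonneg (mul_nonneg (ha0 x y) (sq_nonneg _)) (hμ0 k)
  have hgs : ∀ k, ∑ x, ∑ y, g k x y ≤ 2 := by
    intro k
    simp only [hg, ← Finset.sum_div, hE]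
    rcases (hμ0 k).eq_or_lt with h | h
    · rw [← h]; simp
    · rw [mul_div_assoc, div_self h.ne']; norm_num
  -- the resistance formula
  have hRg : ∀ x y, R x y = ∑ k, g k x y := by
    intro x y
    rcases h01 x y with h | h
    · rw [hR0 x y h]
      simp [hg, h]
    · obtain ⟨φ, hφ, hRφ⟩ := hR x y h
      have c1 : ∀ k, f k x - f k y = μ k * ∑ v, f k v * φ v := by
        intro k
        have := green φ (f k)
        simp only [hφ, hL] at this
        simp only [mul_sub, Finset.sum_sub_distrib, mul_ite, mul_one, mul_zero,
          Finset.sum_ite_eq', Finset.mem_univ, if_true] at this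
        rw [this, Finset.mul_sum]
        exact Finset.sum_congr rfl (fun z _ => by ring)
      have c2 : ∀ u, φ u = ∑ k, (∑ v, f k v * φ v) * f k u := by
        intro u
        simp only [Finset.sum_mul]
        rw [Finset.sum_comm]
        have : ∀ v, ∑ k, f k v * φ v * f k u = φ v * if v = u then 1 else 0 := by
          intro v
          rw [← hf2, Finset.mul_sum]
          exact Finset.sum_congr rfl (fun z _ => by ring)
        simp only [this]
        simp
      rw [hRφ, c2 x, c2 y, ← Finset.sum_sub_distrib]
      refine Finset.sum_congr rfl (fun k _ => ?_)
      rw [← mul_sub]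
      simp only [hg, h, one_mul]
      rcases (hμ0 k).eq_or_lt with h0 | h0
      · rw [c1 k, ← h0]; simp
      · rw [eq_div_iff h0.ne']
        have := c1 k
        rw [pow_two]
        nth_rewrite 2 [this]
        ring
  have hRnn : ∀ x y, 0 ≤ R x y := fun x y => by
    rw [hRg]; exact Finset.sum_nonneg (fun k _ => hg0 k x y)
  have hsumS : ∀ S : Finset V, ∑ x, ∑ y, ∑ k ∈ S, g k x y ≤ 2 * S.card := by
    intro S
    have h1 : ∑ x, ∑ y, ∑ k ∈ S, g k x y = ∑ k ∈ S, ∑ x, ∑ y, g k x y := by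
      rw [Finset.sum_comm (s := S)]
      refine Finset.sum_congr rfl (fun x _ => ?_)
      rw [Finset.sum_comm]
    rw [h1]
    refine (Finset.sum_le_card_nsmul S _ 2 (fun k _ => hgs k)).trans ?_
    rw [nsmul_eq_mul, mul_comm]
  have hsumR : ∑ x, ∑ y, R x y ≤ 2 * Fintype.card V := by
    simp only [hRg]
    exact hsumS Finset.univ
  refine ⟨hsumR, ?_⟩
  have hd0 : 0 ≤ d ∨ IsEmpty V := by
    by_cases hV : Nonempty V
    · left
      rw [← hd hV.some]
      exact Finset.sum_nonneg (fun y _ => ha0 _ y)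
    · right; exact not_nonempty_iff.1 hV
  rcases hd0 with hd0 | hV
  swap
  · simp
  set S : Finset V := Finset.univ.filter (fun k => μ k ≤ d / 2) with hS
  -- trace bound
  have htr : ∑ k, l k ^ 2 = Fintype.card V * d := by
    have t1 : ∀ k, l k ^ 2 = ∑ x, (∑ y, a x y * f k y) * (∑ z, a x z * f k z) := by
      intro k
      simp only [hf3]
      have : ∑ x, l k * f k x * (l k * f k x) = l k ^ 2 * ∑ x, f k x * f k x := by
        rw [Finset.mul_sum]; exact Finset.sum_congr rfl (fun z _ => by ring)
      rw [this, hf1, mul_one]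
    simp only [t1]
    rw [Finset.sum_comm]
    have t2 : ∀ x, ∑ k, (∑ y, a x y * f k y) * (∑ z, a x z * f k z) = d := by
      intro x
      simp only [Finset.sum_mul_sum]
      rw [Finset.sum_comm]
      have t3 : ∀ y, ∑ k, ∑ z, a x y * f k y * (a x z * f k z) = a x y := by
        intro y
        rw [Finset.sum_comm]
        have t4 : ∀ z, ∑ k, a x y * f k y * (a x z * f k z) =
            a x y * a x z * if y = z then 1 else 0 := by
          intro z
          rw [← hf2, Finset.mul_sum]
          exact Finset.sum_congr rfl (fun z _ => by ring)
        simp only [t4]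
        simp only [mul_ite, mul_one, mul_zero, Finset.sum_ite_eq, Finset.mem_univ, if_true]
        rcases h01 x y with h | h <;> simp [h]
      simp only [t3, hd]
    simp [t2]
  have hcard : d * S.card ≤ 4 * Fintype.card V := by
    have u1 : ∑ k ∈ S, (d / 2) ^ 2 ≤ ∑ k, l k ^ 2 := by
      refine le_trans (Finset.sum_le_sum (fun k hk => ?_))
        (Finset.sum_le_univ_sum_of_nonneg (fun k => sq_nonneg (l k)))
      rw [hS, Finset.mem_filter] at hk
      have : d / 2 ≤ l k := by have := hk.2; simp only [hμ] at this; linarith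
      exact pow_le_pow_left₀ (by linarith) this 2
    rw [htr, Finset.sum_const, nsmul_eq_mul] at u1
    rcases hd0.eq_or_lt with h | h
    · rw [← h]; simp
    · by_contra hc
      push Not at hc
      nlinarith
  -- pointwise bound
  have hpt : ∀ x y, d * R x y ^ 2 ≤ 4 * R x y + d * ∑ k ∈ S, g k x y := by
    intro x y
    have hlow : 0 ≤ ∑ k ∈ S, g k x y := Finset.sum_nonneg (fun k _ => hg0 k x y)
    have v1 : d * R x y ≤ 4 + d * ∑ k ∈ S, g k x y := by
      have v2 : R x y = ∑ k ∈ S, g k x y + ∑ k ∈ Finset.univ.filter (fun k => ¬ μ k ≤ d / 2), g k x y := by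
        rw [hRg, hS, Finset.sum_filter_add_sum_filter_not]
      have v3 : d * ∑ k ∈ Finset.univ.filter (fun k => ¬ μ k ≤ d / 2), g k x y ≤ 4 := by
        rw [Finset.mul_sum]
        calc ∑ k ∈ Finset.univ.filter (fun k => ¬ μ k ≤ d / 2), d * g k x y
            ≤ ∑ k ∈ Finset.univ.filter (fun k => ¬ μ k ≤ d / 2), 2 * (f k x - f k y) ^ 2 := by
              refine Finset.sum_le_sum (fun k hk => ?_)
              rw [Finset.mem_filter] at hk
              have hk2 := not_le.1 hk.2
              have hpos : 0 < μ k := by linarith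
              simp only [hg]
              rw [← mul_div_assoc, div_le_iff₀ hpos]
              have ha1 : a x y ≤ 1 := by rcases h01 x y with h | h <;> simp [h]
              have w1 : a x y * (f k x - f k y) ^ 2 ≤ (f k x - f k y) ^ 2 := by
                have := sq_nonneg (f k x - f k y)
                nlinarith
              have := sq_nonneg (f k x - f k y)
              nlinarith [mul_le_mul_of_nonneg_left w1 hd0]
          _ ≤ ∑ k, 2 * (f k x - f k y) ^ 2 :=
              Finset.sum_le_univ_sum_of_nonneg (fun k => by positivity)
          _ = 2 * (∑ k, f k x * f k x + ∑ k, f k y * f k y - 2 * ∑ k, f k x * f k y) := by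
              simp only [Finset.mul_sum, ← Finset.sum_add_distrib, ← Finset.sum_sub_distrib]
              exact Finset.sum_congr rfl (fun z _ => by ring)
          _ ≤ 4 := by
              simp only [hf2, if_true]
              split_ifs <;> norm_num
      rw [v2, mul_add]
      linarith
    have v4 := mul_le_mul_of_nonneg_left v1 (hRnn x y)
    have v5 : R x y * (d * ∑ k ∈ S, g k x y) ≤ d * ∑ k ∈ S, g k x y :=
      mul_le_of_le_one_left (mul_nonneg hd0 hlow) (hR1 x y)
    nlinarith
  calc d * ∑ x, ∑ y, R x y ^ 2 = ∑ x, ∑ y, d * R x y ^ 2 := by simp only [Finset.mul_sum]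
    _ ≤ ∑ x, ∑ y, (4 * R x y + d * ∑ k ∈ S, g k x y) :=
        Finset.sum_le_sum (fun x _ => Finset.sum_le_sum (fun y _ => hpt x y))
    _ = 4 * ∑ x, ∑ y, R x y + d * ∑ x, ∑ y, ∑ k ∈ S, g k x y := by
        simp only [Finset.sum_add_distrib, ← Finset.mul_sum]
    _ ≤ 4 * (2 * Fintype.card V) + d * (2 * S.card) := by
        have := mul_le_mul_of_nonneg_left (hsumS S) hd0
        linarith
    _ ≤ 16 * Fintype.card V := by linarith

end spectral

section final
variable {V : Type} [Fintype V] [DecidableEq V]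

theorem degIn_eq (G : SimpleGraph V) (x : V) (T : Finset (Sym2 V)) (hT : T ∈ trees G) :
    (degIn x T : ℝ) = ∑ y, if s(x, y) ∈ T then (1 : ℝ) else 0 := by
  rw [Finset.sum_boole, degIn]
  congr 1
  symm
  apply Finset.card_bij (fun y _ => s(x, y))
  · intro y hy
    simp only [Finset.mem_filter, Finset.mem_univ, true_and] at hy
    simp [hy]
  · intro y _ z _ h
    exact Sym2.congr_right.1 h
  · intro e he
    rw [Finset.mem_filter] at he
    obtain ⟨y, rfl⟩ := he.2
    exact ⟨y, by simp [he.1], rfl⟩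

theorem main_bound (G : SimpleGraph V) (d : ℝ) (r : V) (hN : (trees G).card ≠ 0)
    (hd : ∀ x, ∑ y, w0 G s(x, y) = d) :
    ∑ T ∈ trees G, ∑ x : V, ((degIn x T : ℝ)) ^ 2 ≤
      18 * ((trees G).card * Fintype.card V) := by
  set N : ℝ := ((trees G).card : ℝ) with hNdef
  have hN' : 0 < N := by rw [hNdef]; exact_mod_cast Nat.pos_of_ne_zero hN
  set R : V → V → ℝ := fun x y => c1 G s(x, y) / N with hRdef
  have hw : ∀ x y, w0 G s(x, y) = 1 → G.Adj x y := by
    intro x y h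
    by_contra h'
    simp [w0, h'] at h
  have hnot : ∀ x y, ¬ G.Adj x y → c1 G s(x, y) = 0 := by
    intro x y h
    apply Finset.sum_eq_zero
    intro T hT
    simp only [trees, Finset.mem_filter] at hT
    rw [if_neg]
    intro h'
    exact h (hT.2.1 h')
  have hle : ∀ e, c1 G e ≤ N := by
    intro e
    have : c1 G e ≤ ∑ T ∈ trees G, (1 : ℝ) :=
      Finset.sum_le_sum (fun T _ => by split_ifs <;> norm_num)
    simpa using this
  have hc0 : ∀ e, 0 ≤ c1 G e := fun e =>
    Finset.sum_nonneg (fun T _ => by split_ifs <;> norm_num)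
  obtain ⟨s1, s2⟩ := spectral_bound (fun x y => w0 G s(x, y)) d
    (fun x y => by rw [Sym2.eq_swap])
    (fun x y => by by_cases h : s(x, y) ∈ G.edgeSet <;> simp only [w0, h, if_true, if_false] <;> simp) hd R
    (fun x y h => by
      have : ¬ G.Adj x y := fun h' => by simp [w0, h'] at h
      simp [hRdef, hnot x y this])
    (fun x y => (div_le_one hN').2 (hle _))
    (fun x y h => potential G r x y (hw x y h) hN)
  have hx : ∀ x, ∑ T ∈ trees G, ((degIn x T : ℝ)) ^ 2 ≤
      N * (∑ y, R x y + d * ∑ y, R x y ^ 2) := by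
    intro x
    have e1 : ∑ T ∈ trees G, ((degIn x T : ℝ)) ^ 2 = ∑ y, ∑ z, c2 G s(x, y) s(x, z) := by
      have : ∀ T ∈ trees G, ((degIn x T : ℝ)) ^ 2 = ∑ y, ∑ z,
          (if s(x, y) ∈ T then (1 : ℝ) else 0) * (if s(x, z) ∈ T then (1 : ℝ) else 0) := by
        intro T hT
        rw [degIn_eq G x T hT, pow_two, Finset.sum_mul_sum]
      rw [Finset.sum_congr rfl this, Finset.sum_comm]
      refine Finset.sum_congr rfl (fun y _ => ?_)
      rw [Finset.sum_comm]
      rfl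
    have e2 : ∀ y z, c2 G s(x, y) s(x, z) ≤ N * ((if y = z then R x y else 0) + R x y * R x z) := by
      intro y z
      have hR0 : ∀ y, 0 ≤ R x y := fun y => div_nonneg (hc0 _) hN'.le
      have hNR : ∀ y, N * R x y = c1 G s(x, y) := fun y => by
        simp only [hRdef]; field_simp
      by_cases hyz : y = z
      · subst hyz
        have : c2 G s(x, y) s(x, y) = c1 G s(x, y) := by
          refine Finset.sum_congr rfl (fun T _ => ?_)
          split_ifs <;> norm_num
        rw [this, if_pos rfl, mul_add, hNR]
        have := mul_nonneg hN'.le (mul_nonneg (hR0 y) (hR0 y))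
        linarith
      · rw [if_neg hyz, zero_add]
        have hcle : c2 G s(x, y) s(x, z) ≤ c1 G s(x, y) ∧ c2 G s(x, y) s(x, z) ≤ c1 G s(x, z) :=
          ⟨Finset.sum_le_sum (fun T _ => by split_ifs <;> norm_num),
           Finset.sum_le_sum (fun T _ => by split_ifs <;> norm_num)⟩
        have hnn := mul_nonneg hN'.le (mul_nonneg (hR0 y) (hR0 z))
        by_cases hy : G.Adj x y
        · by_cases hz : G.Adj x z
          · have := neg_corr G r x y x z hy hz (by
              intro h; exact hyz (Sym2.congr_right.1 h)) hN
            rw [← mul_le_mul_iff_left₀ hN']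
            calc _ ≤ _ := this
              _ = N * (R x y * R x z) * N := by rw [← hNR, ← hNR]; ring
          · have := hnot x z hz
            linarith [hcle.2]
        · have := hnot x y hy
          linarith [hcle.1]
    have e3 : ∑ y, ∑ z, c2 G s(x, y) s(x, z) ≤ N * (∑ y, R x y + (∑ y, R x y) ^ 2) := by
      refine (Finset.sum_le_sum (fun y _ => Finset.sum_le_sum (fun z _ => e2 y z))).trans (le_of_eq ?_)
      rw [pow_two, Finset.sum_mul_sum]
      simp only [← Finset.mul_sum, Finset.sum_add_distrib]
      simp
    have e4 : (∑ y, R x y) ^ 2 ≤ d * ∑ y, R x y ^ 2 := by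
      have cs := Finset.sum_mul_sq_le_sq_mul_sq Finset.univ (fun y => w0 G s(x, y)) (R x)
      have i1 : ∀ y, w0 G s(x, y) * R x y = R x y := by
        intro y
        by_cases h : G.Adj x y
        · simp [w0, h]
        · simp [hRdef, hnot x y h]
      have i2 : ∀ y, w0 G s(x, y) ^ 2 = w0 G s(x, y) := by
        intro y
        by_cases h : G.Adj x y <;> simp [w0, h]
      simp only [i1, i2, hd] at cs
      exact cs
    rw [e1]
    refine e3.trans (mul_le_mul_of_nonneg_left ?_ hN'.le)
    linarith
  rw [Finset.sum_comm]
  refine (Finset.sum_le_sum (fun x _ => hx x)).trans ?_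
  rw [← Finset.mul_sum, Finset.sum_add_distrib, ← Finset.mul_sum]
  have : N * (∑ x, ∑ y, R x y + d * ∑ x, ∑ y, R x y ^ 2) ≤ N * (18 * Fintype.card V) :=
    mul_le_mul_of_nonneg_left (by linarith) hN'.le
  linarith

end final

end UST

/-- There is a universal constant `C` such that for every finite connected
simple regular graph, the expected squared degree of a uniformly random vertex
in a uniform spanning tree is at most `C`.  The expectation is written as
`(Σ_{T spanning tree} Σ_x deg(x;T)²) / (#spanning trees · #vertices)`. -/
theorem stmt15 :
    ∃ C : ℝ, ∀ (V : Type) [Fintype V] [DecidableEq V]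
      (G : SimpleGraph V) (d : ℕ),
      G.Connected → G.IsRegularOfDegree d →
      (∑ T ∈ Finset.univ.filter (fun T => IsSpanningTree G T),
          ∑ x : V, ((degIn x T : ℝ)) ^ 2)
        / (((Finset.univ.filter (fun T => IsSpanningTree G T)).card : ℝ)
            * (Fintype.card V : ℝ))
        ≤ C := by
  refine ⟨18, ?_⟩
  intro V _ _ G d hG hreg
  by_cases hN : (UST.trees G).card = 0
  · have h0 : (Finset.univ.filter (fun T => IsSpanningTree G T)).card = 0 := hN
    rw [h0]
    simp
  · have hN' : (0 : ℝ) < (UST.trees G).card := by exact_mod_cast Nat.pos_of_ne_zero hN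
    obtain ⟨r⟩ := hG.nonempty
    have hV : (0 : ℝ) < Fintype.card V := by exact_mod_cast Fintype.card_pos_iff.2 ⟨r⟩
    have hd : ∀ x, ∑ y, UST.w0 G s(x, y) = (d : ℝ) := by
      intro x
      rw [← hreg x, ← SimpleGraph.card_neighborFinset_eq_degree]
      simp only [UST.w0, SimpleGraph.mem_edgeSet, Finset.sum_boole]
      congr 2
      ext y
      simp
    have := UST.main_bound G d r hN hd
    exact (div_le_iff₀ (mul_pos hN' hV)).2 this
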